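/- Let w be a word over Σ = {1,…,σ} with alph(w) = Σ. Then |sas(w)| = |mas(w)| if and only if there exists a permutation π of Σ (extended to a homomorphism on words) such that π(w) = A_{ι(w)}. -/

import Mathlib

/-!
Every SAS is a MAS and there are finitely many MAS, so equal cardinalities means that both sets
coincide, i.e. that every MAS has length `ι(w) + 1`.

If `w` is, up to renaming letters, an alternation `p · pᴿ · p ⋯` of `k` blocks, follow the greedy
embedding of a MAS `v`. After deleting a first letter `a`, the remaining word `t` is a MAS of the
part of `w` after the first `a`, while `t` still embeds in `w` itself. If the first letter of `t`
came after `a` in the same block, then, blocks being reversed, it could not have occurred earlier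
in the unread part of `w`, so `t` would embed after `a`, which is absurd. Hence each letter of `v`
uses up a new block and `|v| ≤ k + 1` (`IsMAS.length_le`).

Conversely, suppose every MAS has length `k + 1` with `k = ι(w)`. The word `a^(|w|_a + 1)` is a MAS,
so every letter occurs exactly `k` times, and universality splits `w` into `k` permutations of
the alphabet (`exists_blocks`). If two consecutive blocks, preceded by `i` and followed by `j`
blocks, contained letters `a, b` in the same order, then `a^(i+2) b^(j+2)` would be a MAS of length
`k + 2` (`isMAS_pair`). So each block is the reverse of the one before it, and renaming the letters
of the first block to `1, …, σ` gives `A_k`.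
-/

/-- The word `v₁ = 1·2···σ` over the alphabet `Σ = {1,…,σ} ⊆ ℕ`. -/
def ascWord (σ : ℕ) : List ℕ := (List.range σ).map (· + 1)

/-- The word `v₂ = σ·(σ−1)···1`. -/
def descWord (σ : ℕ) : List ℕ := (ascWord σ).reverse

/-- The word `A_k`: `A_{2k−1} = (v₁v₂)^{k−1}v₁` and `A_{2k} = A_{2k−1}·v₂`,
i.e. `k` alternating blocks `v₁, v₂, v₁, …` starting with `v₁`. -/
def Aword (σ k : ℕ) : List ℕ :=
  ((List.range k).map fun i => if i % 2 = 0 then ascWord σ else descWord σ).flatten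

/-- `v` is a minimal absent subsequence (MAS) of `w`: `v` is a word over `alph(w)` which is
not a subsequence of `w`, but every proper subsequence of `v` is a subsequence of `w`. -/
def IsMAS (w v : List ℕ) : Prop :=
  (∀ a ∈ v, a ∈ w) ∧ ¬ v.Sublist w ∧
    ∀ u : List ℕ, u.Sublist v → u ≠ v → u.Sublist w

/-- `v` is a shortest absent subsequence (SAS) of `w`: `v` is a word over `alph(w)`
which is not a subsequence of `w`, of minimal length with this property. -/
def IsSAS (w v : List ℕ) : Prop :=
  (∀ a ∈ v, a ∈ w) ∧ ¬ v.Sublist w ∧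
    ∀ u : List ℕ, (∀ a ∈ u, a ∈ w) → ¬ u.Sublist w → v.length ≤ u.length

/-- The universality index `ι(w)`: the largest `k` such that every word of length at most `k`
over `alph(w)` is a subsequence of `w`. -/
noncomputable def univIndex (w : List ℕ) : ℕ :=
  sSup {k | ∀ v : List ℕ, (∀ a ∈ v, a ∈ w) → v.length ≤ k → v.Sublist w}

/-- The alternation `p · pᴿ · p · ⋯` with `k` blocks. -/
def alt : ℕ → List ℕ → List ℕ
  | 0, _ => []
  | k + 1, p => p ++ alt k p.reverse

/-- `w` is `k`-universal: every word of length at most `k` over `alph(w)` embeds in `w`. -/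
def IsUniv (w : List ℕ) (k : ℕ) : Prop :=
  ∀ v : List ℕ, (∀ a ∈ v, a ∈ w) → v.length ≤ k → v.Sublist w

/-! ### Alternations -/

lemma flatten_eq_alt (k : ℕ) (p : List ℕ) :
    ((List.range k).map fun i => if i % 2 = 0 then p else p.reverse).flatten = alt k p := by
  induction k generalizing p with
  | zero => rfl
  | succ k ih =>
    rw [List.range_succ_eq_map, List.map_cons, List.flatten_cons, List.map_map, alt,
      ← ih p.reverse, List.reverse_reverse]
    congr 2
    apply List.map_congr_left
    intro i _
    simp only [Function.comp]
    rcases Nat.mod_two_eq_zero_or_one i with h | h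
    · have : (i + 1) % 2 = 1 := by omega
      simp [h, this]
    · have : (i + 1) % 2 = 0 := by omega
      simp [h, this]

lemma Aword_eq_alt (σ k : ℕ) : Aword σ k = alt k (ascWord σ) := flatten_eq_alt k _

lemma map_alt (f : ℕ → ℕ) (k : ℕ) (p : List ℕ) : (alt k p).map f = alt k (p.map f) := by
  induction k generalizing p with
  | zero => rfl
  | succ k ih => simp [alt, ih]

lemma mem_of_mem_alt {k : ℕ} {p : List ℕ} {a : ℕ} (h : a ∈ alt k p) : a ∈ p := by
  induction k generalizing p with
  | zero => simp [alt] at h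
  | succ k ih =>
    rcases List.mem_append.1 h with h | h
    · exact h
    · simpa using ih h

lemma cons_sublist_of_notMem {a : ℕ} {x y t : List ℕ} (hx : a ∉ x)
    (h : (a :: t).Sublist (x ++ y)) : (a :: t).Sublist y := by
  induction x with
  | nil => exact h
  | cons c x ih =>
    simp only [List.mem_cons, not_or] at hx
    rw [List.cons_append, List.sublist_cons_iff] at h
    rcases h with h | ⟨r, hr, _⟩
    · exact ih hx.2 h
    · exact absurd (List.cons.inj hr).1 hx.1

lemma cons_sublist_iff_of_notMem {a : ℕ} {x y t : List ℕ} (hx : a ∉ x) :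
    (a :: t).Sublist (x ++ a :: y) ↔ t.Sublist y := by
  constructor
  · intro h
    exact List.cons_sublist_cons.1 (cons_sublist_of_notMem hx h)
  · intro h
    exact (List.cons_sublist_cons.2 h).trans (List.sublist_append_right _ _)

/-- The induction along the greedy embedding. The unread part of the word is the end `q` of a block
`q' ++ q` followed by `k` full blocks; the first letter of the absent word `v` is not in `q`, so
reading it moves on to a new block. -/
lemma length_le_of_minimal (k : ℕ) : ∀ (q' q v : List ℕ), (q' ++ q).Nodup →
    (∀ a ∈ v, a ∈ q' ++ q) → ¬ v.Sublist (q ++ alt k (q' ++ q).reverse) →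
    (∀ u : List ℕ, u.Sublist v → u ≠ v → u.Sublist (q ++ alt k (q' ++ q).reverse)) →
    (∀ a t, v = a :: t → a ∉ q) → v.length ≤ k + 1 := by
  induction k with
  | zero =>
    intro q' q v _ _ _ hmin hq
    rcases v with _ | ⟨a, t⟩
    · simp
    · by_contra hlen
      have h := hmin [a] (by simp) (by
        rintro h
        rw [← h] at hlen
        simp at hlen)
      have : a ∈ q := by simpa [alt] using h
      exact hq a t rfl this
  | succ k ih =>
    intro q' q v hnd hv habs hmin hq
    rcases v with _ | ⟨a, t⟩
    · simp
    have haq := hq a t rfl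
    have haq' : a ∈ q' := by
      have := hv a (by simp)
      simpa [haq] using this
    obtain ⟨s, s₂, rfl⟩ := List.append_of_mem haq'
    have hw : q ++ alt (k + 1) (s ++ a :: s₂ ++ q).reverse =
        (q ++ q.reverse ++ s₂.reverse) ++ a :: (s.reverse ++ alt k (s ++ a :: s₂ ++ q)) := by
      simp [alt]
    rw [hw] at habs hmin
    have hax : a ∉ q ++ q.reverse ++ s₂.reverse := by
      simp only [List.nodup_append, List.nodup_cons] at hnd
      simp only [List.mem_append, List.mem_reverse]
      grind
    rw [cons_sublist_iff_of_notMem hax] at habs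
    have hrev : ((q.reverse ++ s₂.reverse ++ [a]) ++ s.reverse) =
        (s ++ a :: s₂ ++ q).reverse := by simp
    have key := ih (q.reverse ++ s₂.reverse ++ [a]) s.reverse t
      (by rw [hrev]; exact List.nodup_reverse.2 hnd)
      (by
        intro b hb
        rw [hrev, List.mem_reverse]
        exact hv b (List.mem_cons_of_mem _ hb))
      (by rw [hrev, List.reverse_reverse]; exact habs)
      (by
        intro u hu hne
        rw [hrev, List.reverse_reverse]
        rw [← cons_sublist_iff_of_notMem hax]
        exact hmin _ (List.cons_sublist_cons.2 hu) (by simpa using hne))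
      (by
        -- The next letter `b` would not occur before the end of the part already read, although
        -- `b :: t'` embeds in the whole unread word.
        rintro b t' rfl hb
        have hb' : b ∉ q ++ q.reverse ++ s₂.reverse ++ [a] := by
          simp only [List.nodup_append, List.nodup_cons] at hnd
          simp only [List.mem_append, List.mem_reverse, List.mem_singleton] at hb ⊢
          grind
        have h := hmin (b :: t') (List.sublist_cons_self _ _) (by
          intro h
          have := congrArg List.length h
          simp at this)
        apply habs
        apply cons_sublist_of_notMem hb'
        simpa using h)
    simpa using key

lemma IsMAS.length_le {k : ℕ} {p v : List ℕ} (hp : p.Nodup) (h : IsMAS (alt k p) v) :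
    v.length ≤ k + 1 := by
  apply length_le_of_minimal k p.reverse [] v
  · simpa using hp
  · intro a ha
    simpa using mem_of_mem_alt (h.1 a ha)
  · simpa using h.2.1
  · simpa using h.2.2
  · simp

/-! ### Shortest and minimal absent subsequences, universality -/

lemma IsSAS.isMAS {w v : List ℕ} (h : IsSAS w v) : IsMAS w v := by
  refine ⟨h.1, h.2.1, fun u hu hne => ?_⟩
  by_contra habs
  have := h.2.2 u (fun a ha => h.1 a (hu.subset ha)) habs
  exact hne (hu.eq_of_length_le this)

lemma finite_mas (w : List ℕ) : {v : List ℕ | IsMAS w v}.Finite := by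
  have h1 : {a : ℕ | a ∈ w}.Finite := List.finite_toSet w
  have h2 : {t : List ℕ | t ∈ w.sublists}.Finite := List.finite_toSet _
  refine (Set.Finite.image2 List.cons h1 h2).subset ?_
  rintro v ⟨hv, habs, hmin⟩
  rcases v with _ | ⟨a, t⟩
  · simp at habs
  · refine ⟨a, hv a (by simp), t, ?_, rfl⟩
    exact List.mem_sublists.2 (hmin t (List.sublist_cons_self _ _) (by
      intro h
      have := congrArg List.length h
      simp at this))

lemma IsUniv.le_length {w : List ℕ} {k a : ℕ} (ha : a ∈ w) (h : IsUniv w k) : k ≤ w.length := by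
  have := (h (List.replicate k a) (by
    intro b hb
    rwa [List.eq_of_mem_replicate hb]) (by simp)).length_le
  simpa using this

lemma bddAbove_univ {w : List ℕ} {a : ℕ} (ha : a ∈ w) :
    BddAbove {k | ∀ v : List ℕ, (∀ a ∈ v, a ∈ w) → v.length ≤ k → v.Sublist w} :=
  ⟨w.length, fun _ h => IsUniv.le_length ha h⟩

lemma isUniv_univIndex {w : List ℕ} {a : ℕ} (ha : a ∈ w) : IsUniv w (univIndex w) := by
  refine Nat.sSup_mem (s := {k | ∀ v : List ℕ, (∀ a ∈ v, a ∈ w) → v.length ≤ k → v.Sublist w})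
    ⟨0, ?_⟩ (bddAbove_univ ha)
  intro v _ hl
  have : v = [] := List.eq_nil_of_length_eq_zero (by omega)
  simp [this]

lemma exists_absent {w : List ℕ} {a : ℕ} (ha : a ∈ w) :
    ∃ v : List ℕ, (∀ a ∈ v, a ∈ w) ∧ ¬ v.Sublist w ∧ v.length ≤ univIndex w + 1 := by
  by_contra! hcon
  have : univIndex w + 1 ≤ univIndex w := by
    refine le_csSup (bddAbove_univ ha) ?_
    intro v hv hl
    by_contra habs
    exact absurd hl (not_le.2 (hcon v hv habs))
  omega

/-- Equal cardinalities, in terms of the lengths of minimal absent subsequences. -/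
lemma card_eq_iff {w : List ℕ} {a : ℕ} (ha : a ∈ w) :
    Set.ncard {v : List ℕ | IsSAS w v} = Set.ncard {v : List ℕ | IsMAS w v} ↔
      ∀ v, IsMAS w v → v.length ≤ univIndex w + 1 := by
  have hsub : {v : List ℕ | IsSAS w v} ⊆ {v : List ℕ | IsMAS w v} := fun v h => h.isMAS
  constructor
  · intro h v hv
    have heq := Set.eq_of_subset_of_ncard_le hsub h.ge (finite_mas w)
    have hs : IsSAS w v := by
      have : v ∈ {v : List ℕ | IsMAS w v} := hv
      rwa [← heq] at this
    obtain ⟨u, hu, habs, hl⟩ := exists_absent ha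
    exact (hs.2.2 u hu habs).trans hl
  · intro h
    congr 1
    refine hsub.antisymm fun v hv => ⟨hv.1, hv.2.1, fun u hu habs => ?_⟩
    have h1 := h v hv
    by_contra hlt
    exact habs (isUniv_univIndex ha u hu (by omega))

/-! ### Decomposition into blocks -/

lemma isMAS_replicate {w : List ℕ} {a : ℕ} (ha : a ∈ w) :
    IsMAS w (List.replicate (w.count a + 1) a) := by
  refine ⟨fun b hb => by rwa [List.eq_of_mem_replicate hb], fun h => ?_, fun u hu hne => ?_⟩
  · have := List.replicate_sublist_iff.1 h
    omega
  · obtain ⟨n, hn, rfl⟩ := List.sublist_replicate_iff.1 hu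
    refine List.replicate_sublist_iff.2 ?_
    rcases Nat.lt_or_ge n (w.count a + 1) with h | h
    · omega
    · exact absurd (by rw [le_antisymm hn h]) hne

/-- Splitting off the first arch: the shortest prefix containing every letter of `S`. -/
lemma exists_arch {S : Finset ℕ} (hS : S.Nonempty) {w : List ℕ} (h : ∀ a ∈ S, a ∈ w) :
    ∃ c ∈ S, ∃ s t, w = s ++ c :: t ∧ c ∉ s ∧ ∀ a ∈ S, a ∈ s ++ [c] := by
  obtain ⟨c, hc, hmax⟩ := Finset.exists_max_image S (fun a => w.idxOf a) hS
  obtain ⟨s, t, rfl, hs⟩ := List.eq_append_cons_of_mem (h c hc)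
  refine ⟨c, hc, s, t, rfl, hs, fun a ha => ?_⟩
  by_contra hcon
  simp only [List.mem_append, List.mem_singleton, not_or] at hcon
  have := hmax a ha
  simp only [List.idxOf_append_of_notMem hcon.1, List.idxOf_append_of_notMem hs,
    List.idxOf_cons_self, List.idxOf_cons_ne _ (Ne.symm hcon.2)] at this
  omega

/-- A word in which every letter of `S` occurs exactly `k` times and every word of length `k` embeds
is a product of `k` permutations of `S`. -/
lemma exists_blocks {S : Finset ℕ} (hS : S.Nonempty) (k : ℕ) : ∀ w : List ℕ, (∀ a ∈ w, a ∈ S) →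
    (∀ a ∈ S, w.count a = k) →
    (∀ v : List ℕ, (∀ a ∈ v, a ∈ S) → v.length = k → v.Sublist w) →
    ∃ L : List (List ℕ), L.length = k ∧ w = L.flatten ∧
      ∀ p ∈ L, p.Nodup ∧ ∀ a, a ∈ p ↔ a ∈ S := by
  induction k with
  | zero =>
    intro w hw hc _
    refine ⟨[], rfl, ?_, by simp⟩
    rw [List.flatten_nil, List.eq_nil_iff_forall_not_mem]
    intro a ha
    exact List.count_eq_zero.1 (hc a (hw a ha)) ha
  | succ k ih =>
    intro w hw hc hu
    obtain ⟨c, hcS, s, t, rfl, hcs, hall⟩ := exists_arch hS (w := w) (by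
      intro a ha
      refine List.count_pos_iff.1 ?_
      rw [hc a ha]
      omega)
    have hut : ∀ v : List ℕ, (∀ a ∈ v, a ∈ S) → v.length = k → v.Sublist t := by
      intro v hv hl
      refine (cons_sublist_iff_of_notMem hcs).1 (hu (c :: v) ?_ (by simp [hl]))
      intro a ha
      rcases List.mem_cons.1 ha with rfl | ha
      · exact hcS
      · exact hv a ha
    have hsplit : s ++ c :: t = (s ++ [c]) ++ t := by simp
    rw [hsplit] at hw hc
    have hcount : ∀ a ∈ S, (s ++ [c]).count a = 1 ∧ t.count a = k := by
      intro a ha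
      have h1 := List.count_pos_iff.2 (hall a ha)
      have h2 : k ≤ t.count a := List.replicate_sublist_iff.1
        (hut (List.replicate k a) (fun b hb => by rwa [List.eq_of_mem_replicate hb]) (by simp))
      have h3 := hc a ha
      rw [List.count_append] at h3
      omega
    obtain ⟨L, hL, rfl, hp⟩ := ih t (fun a ha => hw a (List.mem_append_right _ ha))
      (fun a ha => (hcount a ha).2) hut
    refine ⟨(s ++ [c]) :: L, by simp [hL], by simp, ?_⟩
    intro p hpL
    rcases List.mem_cons.1 hpL with rfl | hpL
    · have hmem : ∀ a, a ∈ s ++ [c] ↔ a ∈ S :=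
        fun a => ⟨fun ha => hw a (List.mem_append_left _ ha), hall a⟩
      refine ⟨List.nodup_iff_count_le_one.2 fun a => ?_, hmem⟩
      by_cases ha : a ∈ S
      · exact (hcount a ha).1.le
      · rw [List.count_eq_zero.2 (fun h => ha ((hmem a).1 h))]
        omega
    · exact hp p hpL

/-! ### Consecutive blocks are reversed -/

lemma exists_split_of_pair_sublist {a b : ℕ} {p : List ℕ} (h : [a, b].Sublist p) :
    ∃ x y, p = x ++ a :: y ∧ b ∈ y := by
  obtain ⟨r₁, r₂, rfl, h1, h2⟩ := List.cons_sublist_iff.1 h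
  obtain ⟨x, y, rfl⟩ := List.append_of_mem h1
  exact ⟨x, y ++ r₂, by simp, List.mem_append_right _ (List.singleton_sublist.1 h2)⟩

/-- Two enumerations of the same letters that order no pair the same way are reverses. -/
lemma eq_reverse_of_no_common_pair {p q : List ℕ} (hp : p.Nodup) (hq : q.Nodup)
    (hpq : ∀ a, a ∈ q ↔ a ∈ p) (h : ∀ a b, [a, b].Sublist p → ¬ [a, b].Sublist q) :
    q = p.reverse := by
  have hperm : q.reverse.Perm p := by
    rw [List.perm_ext_iff_of_nodup (List.nodup_reverse.2 hq) hp]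
    simpa using hpq
  have key : q.reverse = p := by
    refine List.Perm.eq_of_pairwise (le := fun a b => [a, b].Sublist p) ?_ ?_ ?_ hperm
    · intro a b _ _ hab hba
      exfalso
      obtain ⟨x, y, rfl, hb⟩ := exists_split_of_pair_sublist hab
      simp only [List.nodup_append, List.nodup_cons] at hp
      have hbx : b ∉ x ++ [a] := by
        simp only [List.mem_append, List.mem_singleton]
        grind
      have h1 : [b, a].Sublist y :=
        cons_sublist_of_notMem hbx (by simpa using hba)
      have : a ∈ y := h1.subset (by simp)
      exact hp.2.1.1 this
    · rw [List.pairwise_iff_forall_sublist]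
      intro a b hab
      have hba : [b, a].Sublist q := by
        have := hab.reverse
        simpa using this
      have hne : b ≠ a := by
        rintro rfl
        exact (List.nodup_iff_sublist.1 hq) _ hba
      have hap : a ∈ p := (hpq a).1 (hba.subset (by simp))
      have hbp : b ∈ p := (hpq b).1 (hba.subset (by simp))
      have hnot : ¬ [b, a].Sublist p := fun h' => h b a h' hba
      obtain ⟨x, y, rfl⟩ := List.append_of_mem hap
      rcases List.mem_append.1 hbp with hb | hb
      · exact absurd ((List.singleton_sublist.2 hb).append
          (List.singleton_sublist.2 (List.mem_cons_self (a := a) (l := y)))) hnot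
      · rcases List.mem_cons.1 hb with hb | hb
        · exact absurd hb hne
        · exact (List.cons_sublist_cons.2 (List.singleton_sublist.2 hb)).trans
            (List.sublist_append_right _ _)
    · rw [List.pairwise_iff_forall_sublist]
      exact fun h => h
  rw [← key, List.reverse_reverse]

/-- If `a` precedes `b` in both of two consecutive blocks `p`, `q`, a too long MAS appears. -/
lemma isMAS_pair {X p q Y : List ℕ} {a b i j : ℕ} (hp : p.Nodup) (hq : q.Nodup)
    (hap : [a, b].Sublist p) (haq : [a, b].Sublist q)
    (hXa : X.count a = i) (hYb : Y.count b = j) :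
    IsMAS (X ++ (p ++ (q ++ Y))) (List.replicate (i + 2) a ++ List.replicate (j + 2) b) := by
  have hne : a ≠ b := by
    rintro rfl
    exact List.nodup_iff_sublist.1 hp _ hap
  have cpa : p.count a = 1 := List.count_eq_one_of_mem hp (hap.subset (by simp))
  have cqb : q.count b = 1 := List.count_eq_one_of_mem hq (haq.subset (by simp))
  obtain ⟨p₁, p₂, rfl, hbp⟩ := exists_split_of_pair_sublist hap
  obtain ⟨q₁, q₂, rfl, hbq⟩ := exists_split_of_pair_sublist haq
  have cp₂ : 1 ≤ p₂.count b := List.count_pos_iff.2 hbp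
  have cq₂ : 1 ≤ q₂.count b := List.count_pos_iff.2 hbq
  have cqa : (q₁ ++ a :: q₂).count a = 1 := List.count_eq_one_of_mem hq (by simp)
  simp only [List.count_append, List.count_cons_self, List.count_cons_of_ne hne] at cpa cqa cqb
  refine ⟨?_, ?_, ?_⟩
  · intro c hc
    rcases List.mem_append.1 hc with hc | hc
    · rw [List.eq_of_mem_replicate hc]; simp
    · rw [List.eq_of_mem_replicate hc]; simp [hbp]
  · intro h
    obtain ⟨r₁, r₂, hr, h1, h2⟩ := List.append_sublist_iff.1 h
    have h1 := List.replicate_sublist_iff.1 h1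
    have h2 := List.replicate_sublist_iff.1 h2
    -- Only `i + 1` letters `a` precede the `a` of the block `q`, and `j + 1` letters `b` follow it.
    have hr' : r₁ ++ r₂ = (X ++ (p₁ ++ a :: p₂) ++ q₁) ++ (a :: (q₂ ++ Y)) := by
      rw [← hr]; simp
    rcases List.append_eq_append_iff.1 hr' with ⟨z, hz, _⟩ | ⟨z, _, hz⟩
    · have := congrArg (List.count a) hz
      simp only [List.count_append, List.count_cons_self] at this
      omega
    · have := congrArg (List.count b) hz
      simp only [List.count_append, List.count_cons_of_ne hne] at this
      omega
  · intro u hu hune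
    obtain ⟨u₁, u₂, rfl, h1, h2⟩ := List.sublist_append_iff.1 hu
    obtain ⟨m, hm, rfl⟩ := List.sublist_replicate_iff.1 h1
    obtain ⟨n, hn, rfl⟩ := List.sublist_replicate_iff.1 h2
    have hmn : m ≤ i + 1 ∨ n ≤ j + 1 := by
      by_contra hcon
      apply hune
      rw [show m = i + 2 by omega, show n = j + 2 by omega]
    rcases hmn with hm' | hn'
    · have e : X ++ ((p₁ ++ a :: p₂) ++ ((q₁ ++ a :: q₂) ++ Y)) =
          (X ++ (p₁ ++ [a])) ++ (p₂ ++ ((q₁ ++ a :: q₂) ++ Y)) := by simp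
      rw [e]
      refine List.Sublist.append (List.replicate_sublist_iff.2 ?_) (List.replicate_sublist_iff.2 ?_)
      · simp only [List.count_append, List.count_cons_self]
        omega
      · simp only [List.count_append, List.count_cons_of_ne hne]
        omega
    · have e : X ++ ((p₁ ++ a :: p₂) ++ ((q₁ ++ a :: q₂) ++ Y)) =
          (X ++ (p₁ ++ a :: p₂) ++ (q₁ ++ [a])) ++ (q₂ ++ Y) := by simp
      rw [e]
      refine List.Sublist.append (List.replicate_sublist_iff.2 ?_) (List.replicate_sublist_iff.2 ?_)
      · simp only [List.count_append, List.count_cons_self]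
        omega
      · simp only [List.count_append]
        omega

lemma count_flatten_blocks {S : Finset ℕ} {a : ℕ} (ha : a ∈ S) (L : List (List ℕ))
    (hL : ∀ p ∈ L, p.Nodup ∧ ∀ a, a ∈ p ↔ a ∈ S) : L.flatten.count a = L.length := by
  induction L with
  | nil => rfl
  | cons p L ih =>
    have hp := hL p (by simp)
    rw [List.flatten_cons, List.count_append, ih fun q hq => hL q (by simp [hq]),
      List.count_eq_one_of_mem hp.1 ((hp.2 a).2 ha), List.length_cons, add_comm]

/-- A product of permutations of `S`, read after the blocks `K`, alternates as soon as the whole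
word has no MAS longer than its number of blocks plus one. -/
lemma flatten_eq_alt_of_mas {S : Finset ℕ} (L : List (List ℕ)) : ∀ (K : List (List ℕ))
    (p : List ℕ), (∀ r ∈ K ++ p :: L, r.Nodup ∧ ∀ a, a ∈ r ↔ a ∈ S) →
    (∀ v, IsMAS (K ++ p :: L).flatten v → v.length ≤ (K ++ p :: L).length + 1) →
    (p :: L).flatten = alt (L.length + 1) p := by
  induction L with
  | nil => intro K p _ _; simp [alt]
  | cons q L ih =>
    intro K p hL hmas
    have hp := hL p (by simp)
    have hq := hL q (by simp)
    have hrev : q = p.reverse := by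
      refine eq_reverse_of_no_common_pair hp.1 hq.1 (fun a => (hq.2 a).trans (hp.2 a).symm) ?_
      intro a b hap haq
      have haS : a ∈ S := (hp.2 a).1 (hap.subset (by simp))
      have hbS : b ∈ S := (hp.2 b).1 (hap.subset (by simp))
      have hm := isMAS_pair (X := K.flatten) (Y := L.flatten) hp.1 hq.1 hap haq
        (count_flatten_blocks haS K fun r hr => hL r (by simp [hr]))
        (count_flatten_blocks hbS L fun r hr => hL r (by simp [hr]))
      have := hmas _ (by simpa using hm)
      simp at this
      omega
    have hKp : K ++ p :: q :: L = (K ++ [p]) ++ q :: L := by simp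
    rw [hKp] at hL hmas
    have := ih (K ++ [p]) q hL hmas
    rw [List.flatten_cons, this, hrev]
    rfl

/-! ### Renaming letters -/

lemma mem_ascWord {σ a : ℕ} : a ∈ ascWord σ ↔ a ∈ Finset.Icc 1 σ := by
  simp only [ascWord, List.mem_map, List.mem_range, Finset.mem_Icc]
  constructor
  · rintro ⟨x, hx, rfl⟩
    omega
  · intro h
    exact ⟨a - 1, by omega, by omega⟩

lemma nodup_ascWord (σ : ℕ) : (ascWord σ).Nodup :=
  List.nodup_range.map (add_left_injective 1)

/-- An enumeration of `{1,…,σ}` becomes `1·2···σ` under a permutation of the letters. -/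
lemma exists_renaming {σ : ℕ} {p : List ℕ} (hp : p.Nodup)
    (hmem : ∀ a, a ∈ p ↔ a ∈ Finset.Icc 1 σ) :
    ∃ π : ℕ → ℕ, Set.BijOn π (Finset.Icc 1 σ : Finset ℕ) (Finset.Icc 1 σ : Finset ℕ) ∧
      p.map π = ascWord σ := by
  have hlen : p.length = σ := by
    have h : p.toFinset = Finset.Icc 1 σ := by
      ext a
      rw [List.mem_toFinset, hmem]
    rw [← List.toFinset_card_of_nodup hp, h]
    simp
  have hmap : p.map (fun x => p.idxOf x + 1) = ascWord σ := by
    apply List.ext_getElem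
    · simp [ascWord, hlen]
    · intro n h1 h2
      simp [ascWord, List.Nodup.idxOf_getElem hp]
  refine ⟨fun x => p.idxOf x + 1, ⟨?_, ?_, ?_⟩, hmap⟩
  · intro x hx
    have hx : x ∈ p := (hmem x).2 hx
    exact mem_ascWord.1 (hmap ▸ List.mem_map_of_mem hx)
  · intro x hx y hy hxy
    have hx : x ∈ p := (hmem x).2 hx
    simp only [Nat.add_right_cancel_iff] at hxy
    exact (List.idxOf_inj hx).1 hxy
  · intro y hy
    have hy : y ∈ ascWord σ := mem_ascWord.2 hy
    rw [← hmap] at hy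
    obtain ⟨x, hx, rfl⟩ := List.mem_map.1 hy
    exact ⟨x, (hmem x).1 hx, rfl⟩

/-- Proposition 3.8: for a word `w` with `alph(w) = Σ = {1,…,σ}`, we have
`|sas(w)| = |mas(w)|` iff there is a permutation `π` of `Σ` (extended letterwise to words)
with `π(w) = A_{ι(w)}`. -/
theorem card_sas_eq_card_mas_iff (σ : ℕ) (hσ : 2 ≤ σ) (w : List ℕ)
    (halph : ∀ a : ℕ, a ∈ w ↔ a ∈ Finset.Icc 1 σ) :
    Set.ncard {v : List ℕ | IsSAS w v} = Set.ncard {v : List ℕ | IsMAS w v} ↔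
      ∃ π : ℕ → ℕ, Set.BijOn π (Finset.Icc 1 σ : Finset ℕ) (Finset.Icc 1 σ : Finset ℕ) ∧
        w.map π = Aword σ (univIndex w) := by
  have h1S : 1 ∈ Finset.Icc 1 σ := Finset.mem_Icc.2 ⟨le_rfl, by omega⟩
  have h1 : 1 ∈ w := (halph 1).2 h1S
  have huniv := isUniv_univIndex h1
  rw [card_eq_iff h1]
  constructor
  · intro hmas
    have hcount : ∀ a ∈ Finset.Icc 1 σ, w.count a = univIndex w := by
      intro a ha
      have ha := (halph a).2 ha
      have h2 := hmas _ (isMAS_replicate ha)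
      rw [List.length_replicate] at h2
      have h3 := List.replicate_sublist_iff.1 (huniv (List.replicate (univIndex w) a)
        (fun b hb => by rwa [List.eq_of_mem_replicate hb]) (by simp))
      omega
    obtain ⟨L, hlen, hw, hL⟩ := exists_blocks ⟨1, h1S⟩ (univIndex w) w (fun a => (halph a).1)
      hcount (fun v hv hl => huniv v (fun a ha => (halph a).2 (hv a ha)) hl.le)
    rcases L with _ | ⟨p, L⟩
    · rw [hw] at h1
      simp at h1
    have halt : w = alt (univIndex w) p := by
      rw [← hlen, List.length_cons]
      refine hw.trans (flatten_eq_alt_of_mas L [] p hL ?_)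
      rw [List.nil_append, ← hw, hlen]
      exact hmas
    have hp := hL p (by simp)
    obtain ⟨π, hπ, hmap⟩ := exists_renaming hp.1 hp.2
    refine ⟨π, hπ, ?_⟩
    rw [Aword_eq_alt, ← hmap, ← map_alt, ← halt]
  · rintro ⟨π, hπ, hmap⟩ v hv
    -- Undo the renaming: `w` itself alternates the preimage of `1·2···σ`.
    have hinv := hπ.invOn_invFunOn
    set ρ := Function.invFunOn π (Finset.Icc 1 σ : Finset ℕ) with hρ
    have hw : w = alt (univIndex w) ((ascWord σ).map ρ) := by
      rw [← map_alt, ← Aword_eq_alt, ← hmap, List.map_map]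
      symm
      rw [List.map_congr_left (g := id), List.map_id]
      intro a ha
      exact hinv.1 ((halph a).1 ha)
    have hnd : ((ascWord σ).map ρ).Nodup := by
      refine (nodup_ascWord σ).map_on ?_
      intro x hx y hy hxy
      exact hinv.2.injOn (mem_ascWord.1 hx) (mem_ascWord.1 hy) hxy
    rw [hw] at hv
    exact hv.length_le hnd
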